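/- For every n ≥ 2 there exists a Nash equilibrium of the degNCG on n nodes whose social cost equals the minimum social cost over all strategy vectors on n nodes (namely, the center sponsored spanning star S_n); hence the Price of Stability of the degNCG is 1. -/

import Mathlib

/-!
The lower bound behind both halves of the theorem is that two distinct nodes are at distance at
least `1`, and at least `2` unless they are adjacent (`farness_le_edist`). In the star this bound
is attained and every bought edge is free.

*Equilibrium.* The center already pays the least possible amount `1` per other node. A leaf that
additionally buys an edge to another leaf `w` gains one unit of distance to `w`, but `w` then has
degree `2`, so the edge costs at least one unit (`isNE_star`).

*Optimality.* Let `N` be the number of nodes. Order the nodes totally in a way compatible with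
their degrees and charge each edge to its smaller endpoint; let `a u` be the number of edges
charged to `u`, so that `a u ≤ deg u`. Whoever owns an edge charged to `u`, its price is at least
`deg u - 1 ≥ a u - 1`, so all prices together amount to at least `∑ u, a u * (a u - 1)`, while the
distances contribute at least `2 * N * (N - 1) - 2 * ∑ u, a u`. Since
`a * (a - 1) - 2 * a ≥ -2` for every integer `a`, and the maximal node has `a = 0`, the social
cost is at least `2 * N * (N - 1) - 2 * (N - 1) = 2 * (N - 1) ^ 2`, the cost of the star
(`social_lower`, `social_star_le`). Connectivity is never needed.
-/

/-!
Degree price network creation games (degNCG / degkNCG / degAOG / degkAOG).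

A strategy vector assigns to each agent `u` a finite set `st u` of nodes to
which `u` buys an edge.  The induced graph has an edge `{u,v}` iff `v ∈ st u`
or `u ∈ st v`.  The cost of agent `u` is the sum of `deg v - 1` over all `v`
to which `u` bought an edge, plus the sum of (extended, i.e. `⊤` when
unreachable) graph distances from `u` to all nodes.
-/

/-- A strategy vector: each agent picks the set of nodes it buys edges to. -/
abbrev Strategy (V : Type) := V → Finset V

variable {V : Type} [Fintype V] [DecidableEq V]

/-- The network induced by a strategy vector: `{u,v}` is an edge iff
`v ∈ st u` or `u ∈ st v`. -/
def netG (st : Strategy V) : SimpleGraph V :=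
  SimpleGraph.fromRel (fun u v => v ∈ st u)

/-- The degree of a node in the induced network. -/
noncomputable def deg (st : Strategy V) (v : V) : ℕ :=
  letI : DecidableRel (netG st).Adj := Classical.decRel _
  (netG st).degree v

/-- The cost of agent `u`: degree-prices of the bought edges plus the sum of
the distances to all nodes (`⊤` if some node is unreachable). -/
noncomputable def cost (st : Strategy V) (u : V) : ℕ∞ :=
  ((∑ v ∈ st u, (deg st v - 1) : ℕ) : ℕ∞) + ∑ w, (netG st).edist u w

/-- A strategy vector is valid if nobody buys a self-loop and every edge has
exactly one owner. -/
def Valid (st : Strategy V) : Prop :=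
  (∀ u, u ∉ st u) ∧ (∀ u v, v ∈ st u → u ∉ st v)

/-- Pure Nash equilibrium of the degNCG: no agent can strictly decrease her
cost by unilaterally switching to any other strategy. -/
def IsNE (st : Strategy V) : Prop :=
  ∀ (u : V) (t : Finset V), u ∉ t →
    cost st u ≤ cost (Function.update st u t) u

/-- `k`-local Nash equilibrium of the degkNCG: no agent can strictly decrease
her cost by a deviation in which every newly bought edge goes to a node at
distance at most `k` in the current graph. -/
def IskNE (k : ℕ) (st : Strategy V) : Prop :=
  ∀ (u : V) (t : Finset V), u ∉ t →
    (∀ v ∈ t \ st u, (netG st).edist u v ≤ k) →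
    cost st u ≤ cost (Function.update st u t) u

/-- Equilibrium of the add-only game degAOG: no agent can strictly decrease
her cost by adding edges (deviations are supersets of the current strategy). -/
def IsAOEq (st : Strategy V) : Prop :=
  ∀ (u : V) (t : Finset V), u ∉ t → st u ⊆ t →
    cost st u ≤ cost (Function.update st u t) u

/-- Equilibrium of the `k`-local add-only game degkAOG. -/
def IskAOEq (k : ℕ) (st : Strategy V) : Prop :=
  ∀ (u : V) (t : Finset V), u ∉ t → st u ⊆ t →
    (∀ v ∈ t \ st u, (netG st).edist u v ≤ k) →
    cost st u ≤ cost (Function.update st u t) u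

/-- The social cost: the sum of all agents' costs. -/
noncomputable def social (st : Strategy V) : ℕ∞ :=
  ∑ u, cost st u

/-- The center sponsored spanning star on `n + 2` nodes: agent `0` buys an
edge to every other agent, everybody else buys nothing. -/
def starStrat (n : ℕ) : Strategy (Fin (n + 2)) := fun u =>
  if u = 0 then ({0} : Finset (Fin (n + 2)))ᶜ else ∅

/-! ### Distance and cost bounds for arbitrary strategies -/

set_option linter.unusedSectionVars false

/-- The least distance between `u` and `w` compatible with their adjacency: `0` if they are equal,
`1` if they are adjacent, and `2` otherwise. -/
noncomputable def farness (st : Strategy V) (u w : V) : ℕ :=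
  open scoped Classical in if u = w then 0 else if (netG st).Adj u w then 1 else 2

lemma netG_adj (st : Strategy V) (u v : V) :
    (netG st).Adj u v ↔ u ≠ v ∧ (v ∈ st u ∨ u ∈ st v) := by
  simp [netG, SimpleGraph.fromRel_adj]

lemma farness_le_edist (st : Strategy V) (u w : V) :
    (farness st u w : ℕ∞) ≤ (netG st).edist u w := by
  classical
  unfold farness
  split_ifs with h h'
  · simp
  · have : (netG st).edist u w ≠ 0 := by simpa [SimpleGraph.edist_eq_zero_iff] using h
    simpa using Order.one_le_iff_ne_zero.mpr this
  · have h0 : (netG st).edist u w ≠ 0 := by simpa [SimpleGraph.edist_eq_zero_iff] using h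
    have h1 : (netG st).edist u w ≠ 1 := by
      simpa [SimpleGraph.edist_eq_one_iff_adj] using h'
    generalize (netG st).edist u w = x at h0 h1
    induction x using ENat.recTopCoe with
    | top => simp
    | coe m =>
      norm_cast at *
      omega

lemma le_cost (st : Strategy V) (u : V) :
    ((∑ w, ((if w ∈ st u then deg st w - 1 else 0) + farness st u w) : ℕ) : ℕ∞)
      ≤ cost st u := by
  unfold cost
  rw [Finset.sum_add_distrib, Nat.cast_add]
  gcongr
  · simp
  · push_cast
    exact Finset.sum_le_sum fun w _ => farness_le_edist st u w

lemma deg_eq_sum (st : Strategy V) (v : V) :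
    deg st v = open scoped Classical in ∑ w, if (netG st).Adj v w then 1 else 0 := by
  classical
  unfold deg
  rw [Finset.sum_boole, ← SimpleGraph.card_neighborFinset_eq_degree,
    SimpleGraph.neighborFinset_eq_filter]
  simp

lemma two_le_deg (st : Strategy V) {v a b : V} (hab : a ≠ b) (ha : (netG st).Adj v a)
    (hb : (netG st).Adj v b) : 2 ≤ deg st v := by
  classical
  rw [deg_eq_sum, Finset.sum_boole, Nat.cast_id, ← Finset.card_pair hab]
  apply Finset.card_le_card
  intro x hx
  simp only [Finset.mem_insert, Finset.mem_singleton] at hx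
  rcases hx with rfl | rfl <;> simpa

/-! ### The center sponsored star -/

section Star

variable (n : ℕ)

lemma star_adj (u v : Fin (n + 2)) :
    (netG (starStrat n)).Adj u v ↔ u ≠ v ∧ (u = 0 ∨ v = 0) := by
  rw [netG_adj]
  by_cases hu : u = 0 <;> by_cases hv : v = 0 <;> simp [starStrat, hu, hv]

lemma star_deg {v : Fin (n + 2)} (hv : v ≠ 0) : deg (starStrat n) v = 1 := by
  classical
  rw [deg_eq_sum, Finset.sum_eq_single 0]
  · simp [star_adj, hv]
  · intro b _ hb
    simp [star_adj, hv, hb]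
  · simp

/-- In the star any two distinct nodes are joined through the center, so the distances are as
small as adjacency permits. -/
lemma star_edist_le (u w : Fin (n + 2)) :
    (netG (starStrat n)).edist u w ≤ farness (starStrat n) u w := by
  classical
  unfold farness
  split_ifs with h h'
  · simp [h]
  · simpa using (SimpleGraph.edist_eq_one_iff_adj.mpr h').le
  · rw [star_adj] at h'
    have hu : u ≠ 0 := by tauto
    have hw : w ≠ 0 := by tauto
    have h1 : (netG (starStrat n)).Adj u 0 := by simp [star_adj, hu]
    have h2 : (netG (starStrat n)).Adj 0 w := by simp [star_adj, hw.symm]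
    exact (SimpleGraph.Walk.cons h1 (.cons h2 .nil)).edist_le

lemma star_cost_le (u : Fin (n + 2)) :
    cost (starStrat n) u ≤ ((∑ w, farness (starStrat n) u w : ℕ) : ℕ∞) := by
  have h : ∑ v ∈ starStrat n u, (deg (starStrat n) v - 1) = 0 := by
    refine Finset.sum_eq_zero fun v hv => ?_
    have : v ≠ 0 := by
      rintro rfl
      by_cases hu : u = 0 <;> simp [starStrat, hu] at hv
    simp [star_deg n this]
  unfold cost
  rw [h]
  push_cast
  rw [zero_add]
  exact Finset.sum_le_sum fun w _ => star_edist_le n u w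

lemma valid_star : Valid (starStrat n) := by
  constructor
  · intro u
    by_cases hu : u = 0 <;> simp [starStrat, hu]
  · intro u v
    by_cases hu : u = 0 <;> by_cases hv : v = 0 <;> simp [starStrat, hu, hv]

lemma isNE_star : IsNE (starStrat n) := by
  classical
  intro u t hut
  refine (star_cost_le n u).trans (le_trans ?_ (le_cost _ u))
  refine Nat.cast_le.mpr (Finset.sum_le_sum fun w _ => ?_)
  set st' := Function.update (starStrat n) u t with hst'
  have hst'u : st' u = t := by simp [hst']
  rw [hst'u]
  by_cases huw : u = w
  · simp [farness, huw]
  by_cases h : u = 0 ∨ w = 0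
  · -- The star already provides the least possible distance `1`.
    have h1 : farness (starStrat n) u w = 1 := by simp [farness, huw, star_adj, h]
    have h2 : 1 ≤ farness st' u w := by
      unfold farness
      split_ifs <;> simp
    omega
  · -- A leaf `w ≠ u`: getting closer than distance `2` means buying the edge to `w`, whose degree
    -- then counts both the center and `u`.
    push Not at h
    have hw : st' w = ∅ := by
      simp [hst', Function.update_of_ne (Ne.symm huw), starStrat, h.2]
    have h0 : st' 0 = ({0} : Finset (Fin (n + 2)))ᶜ := by
      simp [hst', Function.update_of_ne (Ne.symm h.1), starStrat]
    have h1 : farness (starStrat n) u w = 2 := by simp [farness, huw, star_adj, h]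
    rw [h1]
    by_cases hwt : w ∈ t
    · have hd : 2 ≤ deg st' w := by
        refine two_le_deg st' h.1 ?_ ?_
        · rw [netG_adj, hst'u]
          exact ⟨Ne.symm huw, Or.inr hwt⟩
        · rw [netG_adj, h0]
          simp [h.2]
      have h2 : 1 ≤ farness st' u w := by
        unfold farness
        split_ifs <;> simp
      rw [if_pos hwt]
      omega
    · have h2 : farness st' u w = 2 := by
        simp [farness, huw, netG_adj, hst'u, hw, hwt]
      omega

lemma social_star_le : social (starStrat n) ≤ ((2 * (n + 1) ^ 2 : ℕ) : ℕ∞) := by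
  classical
  unfold social
  refine (Finset.sum_le_sum fun u _ => star_cost_le n u).trans ?_
  rw [← Nat.cast_sum]
  refine Nat.cast_le.mpr (le_of_eq ?_)
  rw [Fin.sum_univ_succ]
  have hc : ∑ w, farness (starStrat n) 0 w = n + 1 := by
    rw [Fin.sum_univ_succ]
    have : ∀ i : Fin (n + 1), farness (starStrat n) 0 i.succ = 1 := fun i => by
      simp [farness, star_adj, (Fin.succ_ne_zero i).symm]
    have h0 : farness (starStrat n) 0 0 = 0 := by simp [farness]
    simp [this, h0]
  have hl : ∀ i : Fin (n + 1), ∑ w, farness (starStrat n) i.succ w = 1 + 2 * n := fun i => by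
    rw [Fin.sum_univ_succ]
    have h0 : farness (starStrat n) i.succ 0 = 1 := by
      simp [farness, star_adj]
    have : ∀ j : Fin (n + 1), farness (starStrat n) i.succ j.succ = if i = j then 0 else 2 :=
      fun j => by simp [farness, star_adj]
    rw [h0]
    simp only [this]
    rw [← Finset.add_sum_erase _ _ (Finset.mem_univ i), Finset.sum_congr rfl
      (g := fun _ => 2) (fun j hj => if_neg (Finset.ne_of_mem_erase hj).symm)]
    simp [Finset.card_erase_of_mem, mul_comm]
  rw [hc]
  simp only [hl]
  simp
  ring

end Star

/-! ### Optimality of the star -/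

/-- The combinatorial core of the optimality bound: on `N = n + 2` nodes, the prices of `m` edges
add up to at least `2 * m - 2 * (N - 1)`. Here `O` plays the role of the indicator matrix of edge
ownership (only its nonnegativity and zero diagonal matter), `d` is the degree sequence and `k` an
injective key refining the order by degree; an edge is charged to its endpoint with the smaller
key. -/
lemma charging (n : ℕ) (O : Fin (n + 2) → Fin (n + 2) → ℤ) (d : Fin (n + 2) → ℤ)
    (k : Fin (n + 2) → ℕ) (hO : ∀ u v, 0 ≤ O u v) (hOd : ∀ u, O u u = 0)
    (hd : ∀ u, d u = ∑ v, (O u v + O v u)) (hk : Function.Injective k)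
    (hkd : ∀ u v, k u < k v → d u ≤ d v) :
    2 * ∑ u, ∑ v, O u v - 2 * (n + 1) ≤ ∑ u, ∑ v, O u v * (d v - 1) := by
  set L : Fin (n + 2) → Fin (n + 2) → ℤ := fun u v => if k u < k v then 1 else 0 with hL
  set a : Fin (n + 2) → ℤ := fun u => ∑ v, (O u v + O v u) * L u v with ha
  have hL01 : ∀ u v, L u v = 0 ∨ L u v = 1 := fun u v => by
    simp only [hL]; split_ifs <;> simp
  have hLO : ∀ u v, O u v * (L u v + L v u) = O u v := fun u v => by
    by_cases h : u = v
    · subst h; simp [hOd]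
    · have := hk.ne h
      rcases lt_or_gt_of_ne this with h' | h' <;> simp [hL, h', h'.not_gt]
  have ha0 : ∀ u, 0 ≤ a u := fun u => Finset.sum_nonneg fun v _ => by
    rcases hL01 u v with h | h <;> rw [h] <;> linarith [hO u v, hO v u]
  have had : ∀ u, a u ≤ d u := fun u => by
    rw [hd]
    refine Finset.sum_le_sum fun v _ => ?_
    rcases hL01 u v with h | h <;> rw [h] <;> linarith [hO u v, hO v u]
  -- Each edge is charged exactly once.
  have hsum : ∑ u, ∑ v, O u v = ∑ u, a u := by
    have : ∑ u, ∑ v, O v u * L u v = ∑ u, ∑ v, O u v * L v u := Finset.sum_comm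
    simp only [ha, add_mul, Finset.sum_add_distrib]
    rw [this, ← Finset.sum_add_distrib]
    refine Finset.sum_congr rfl fun u _ => ?_
    rw [← Finset.sum_add_distrib]
    exact Finset.sum_congr rfl fun v _ => by rw [← mul_add, hLO]
  have hprice : ∑ u, a u * (d u - 1) ≤ ∑ u, ∑ v, O u v * (d v - 1) := by
    have h1 : ∑ u, a u * (d u - 1)
        = ∑ u, ∑ v, (O u v * L u v * (d u - 1) + O u v * L v u * (d v - 1)) := by
      have : ∑ u, ∑ v, O v u * L u v * (d u - 1) = ∑ u, ∑ v, O u v * L v u * (d v - 1) :=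
        Finset.sum_comm
      simp only [ha, Finset.sum_mul, add_mul, Finset.sum_add_distrib]
      rw [this]
    rw [h1]
    refine Finset.sum_le_sum fun u _ => Finset.sum_le_sum fun v _ => ?_
    have h2 : O u v * L u v * (d u - 1) ≤ O u v * L u v * (d v - 1) := by
      by_cases h : k u < k v
      · have := hkd u v h
        exact mul_le_mul_of_nonneg_left (by linarith) (by simp [hL, h, hO])
      · simp [hL, h]
    calc _ ≤ O u v * L u v * (d v - 1) + O u v * L v u * (d v - 1) := by linarith
      _ = O u v * (L u v + L v u) * (d v - 1) := by ring
      _ ≤ _ := by rw [hLO]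
  obtain ⟨m, -, hm⟩ := Finset.exists_max_image Finset.univ k Finset.univ_nonempty
  have ham : a m = 0 := Finset.sum_eq_zero fun v _ => by
    simp [hL, hm v (Finset.mem_univ v)]
  -- `a * (a - 1) - 2 * a + 2 = (a - 1) * (a - 2)` is nonnegative on the integers, and at the
  -- maximal node the left-hand side without the `+ 2` is already `0`.
  have hpt : ∀ u, 2 * a u - (if u = m then 0 else 2) ≤ a u * (d u - 1) := fun u => by
    split_ifs with h
    · simp [h, ham]
    · have h1 : a u * (a u - 1) ≤ a u * (d u - 1) :=
        mul_le_mul_of_nonneg_left (by linarith [had u]) (ha0 u)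
      have h2 : 0 ≤ (a u - 1) * (a u - 2) := by
        rcases le_or_gt (a u) 1 with h | h
        · exact mul_nonneg_of_nonpos_of_nonpos (by omega) (by omega)
        · exact mul_nonneg (by omega) (by omega)
      linarith
  have hfin := Finset.sum_le_sum fun u (_ : u ∈ Finset.univ) => hpt u
  have hcount : ∑ u : Fin (n + 2), (if u = m then (0 : ℤ) else 2) = 2 * (n + 1) := by
    rw [← Finset.add_sum_erase _ _ (Finset.mem_univ m), Finset.sum_congr rfl
      (g := fun _ => 2) (fun j hj => if_neg (Finset.ne_of_mem_erase hj))]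
    simp [Finset.card_erase_of_mem, mul_comm]
  rw [Finset.sum_sub_distrib, hcount, ← Finset.mul_sum] at hfin
  rw [hsum]
  linarith

/-- No valid strategy vector, connected or not, is cheaper than the star: a nonadjacent pair costs
at least `2` in each direction and an adjacent one at least `1`, and `charging` shows that the
prices make up for the distance saved by every edge beyond the first `n + 1`. -/
lemma social_lower (n : ℕ) (st : Strategy (Fin (n + 2))) (hv : Valid st) :
    ((2 * (n + 1) ^ 2 : ℕ) : ℕ∞) ≤ social st := by
  classical
  refine le_trans ?_ (Finset.sum_le_sum fun u _ => le_cost st u)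
  rw [← Nat.cast_sum]
  refine Nat.cast_le.mpr ?_
  zify
  set O : Fin (n + 2) → Fin (n + 2) → ℤ := fun u v => if v ∈ st u then 1 else 0 with hO
  -- By unique ownership, `O u v + O v u` is the adjacency indicator.
  have hadj : ∀ u v, (if (netG st).Adj u v then (1 : ℤ) else 0) = O u v + O v u := fun u v => by
    by_cases h1 : v ∈ st u
    · have h2 := hv.2 u v h1
      have h3 : u ≠ v := by rintro rfl; exact h2 h1
      simp [hO, netG_adj, h1, h2, h3]
    · by_cases h2 : u ∈ st v
      · have h3 : u ≠ v := by rintro rfl; exact h1 h2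
        simp [hO, netG_adj, h1, h2, h3]
      · simp [hO, netG_adj, h1, h2]
  have hfar : ∀ u v, (farness st u v : ℤ) = (if u = v then 0 else 2) - (O u v + O v u) :=
    fun u v => by
    rw [← hadj]
    unfold farness
    by_cases h : u = v
    · simp [h]
    · by_cases h' : (netG st).Adj u v <;> simp [h, h']
  have hd : ∀ u, (deg st u : ℤ) = ∑ v, (O u v + O v u) := fun u => by
    rw [deg_eq_sum]
    push_cast
    exact Finset.sum_congr rfl fun v _ => hadj u v
  -- Degree first, ties broken by index.
  have key := charging n O (fun u => deg st u) (fun u => deg st u * (n + 2) + u)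
    (fun u v => by simp only [hO]; split_ifs <;> simp)
    (fun u => by simp [hO, hv.1 u]) hd
    (fun u v h => by
      have h1 := congrArg (· % (n + 2)) h
      simpa [Nat.mul_add_mod_of_lt, Nat.mod_eq_of_lt, Fin.ext_iff] using h1)
    (fun u v h => by
      by_contra hlt
      push Not at hlt
      have h1 : deg st v + 1 ≤ deg st u := by exact_mod_cast hlt
      have h2 := Nat.mul_le_mul_right (n + 2) h1
      have h3 := v.isLt
      have h4 : deg st u * (n + 2) + u < deg st v * (n + 2) + v := h
      rw [add_mul] at h2
      omega)
  have hprice : ∑ u, ∑ v, O u v * ((deg st v : ℤ) - 1)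
      ≤ ∑ u, ∑ v, (if v ∈ st u then ((deg st v - 1 : ℕ) : ℤ) else 0) := by
    refine Finset.sum_le_sum fun u _ => Finset.sum_le_sum fun v _ => ?_
    by_cases h : v ∈ st u
    · simp only [hO, h, if_true]
      omega
    · simp [hO, h]
  have hdiag : ∑ u : Fin (n + 2), ∑ v : Fin (n + 2), (if u = v then (0 : ℤ) else 2)
      = (n + 2) * (2 * (n + 1)) := by
    have : ∀ u : Fin (n + 2), ∑ v : Fin (n + 2), (if u = v then (0 : ℤ) else 2)
        = 2 * (n + 1) := fun u => by
      rw [← Finset.add_sum_erase _ _ (Finset.mem_univ u), Finset.sum_congr rfl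
        (g := fun _ => 2) (fun j hj => if_neg (Finset.ne_of_mem_erase hj).symm)]
      simp [Finset.card_erase_of_mem, mul_comm]
    simp [this]
  have hcomm : ∑ u, ∑ v, O v u = ∑ u, ∑ v, O u v := Finset.sum_comm
  simp only [Finset.sum_add_distrib, hfar, Finset.sum_sub_distrib, hcomm, hdiag]
  nlinarith [key, hprice]

/-- For every `n ≥ 2` (here: `n + 2` nodes) there exists a Nash
equilibrium of the degNCG, namely the center sponsored spanning star, whose
social cost equals the minimum social cost over all strategy vectors; hence
the Price of Stability of the degNCG is 1. -/
theorem PoS_one (n : ℕ) :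
    ∃ st : Strategy (Fin (n + 2)), Valid st ∧ IsNE st ∧
      (∀ st' : Strategy (Fin (n + 2)), Valid st' → social st ≤ social st') ∧
      st = starStrat n := by
  exact ⟨starStrat n, valid_star n, isNE_star n,
    fun st' h => (social_star_le n).trans (social_lower n st' h), rfl⟩
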